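/- Let g be a finite-dimensional real vector space with a bilinear bracket [·,·] satisfying the left Leibniz identity [x,[y,z]] = [[x,y],z] + [y,[x,z]] for all x,y,z ∈ g, and let ad(x) ∈ End(g) denote the linear map y ↦ [x,y]. Define x∘y := exp(ad(x)) y, where exp is the exponential of linear endomorphisms. Then for all x,y,z ∈ g: x∘(y∘z) = (x∘y)∘(x∘z), 0∘x = x, and x∘0 = 0; that is, (g,∘,0) is a pointed rack. -/

import Mathlib

open NormedSpace in
/-- If `[A, ad v] = ad (A v)` for all `v`, then `exp A` intertwines `ad y` and `ad (exp A y)`. -/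
theorem exp_intertwine_aux {g : Type*} [NormedAddCommGroup g] [NormedSpace ℝ g]
    [CompleteSpace g] (ad : g →L[ℝ] (g →L[ℝ] g)) (A : g →L[ℝ] g)
    (hA : ∀ v, A * ad v = ad (A v) + ad v * A) (y : g) :
    ad (exp A y) * exp A = exp A * ad y := by
  have hpos : ∀ t : ℝ, HasDerivAt (fun u : ℝ => exp (u • A)) (A * exp (t • A)) t :=
    fun t => hasDerivAt_exp_smul_const' A t
  have hneg : ∀ t : ℝ, HasDerivAt (fun u : ℝ => exp (u • (-A))) (exp (t • (-A)) * (-A)) t :=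
    fun t => hasDerivAt_exp_smul_const (-A) t
  have hv : ∀ t : ℝ, HasDerivAt (fun u : ℝ => ad (exp (u • A) y)) (ad (A (exp (t • A) y))) t := by
    intro t
    have h1 : HasDerivAt (fun u : ℝ => exp (u • A) y) ((A * exp (t • A)) y) t :=
      ((ContinuousLinearMap.apply ℝ g y).hasFDerivAt.comp_hasDerivAt t (hpos t))
    exact ad.hasFDerivAt.comp_hasDerivAt t h1
  have hF : ∀ t : ℝ, HasDerivAt
      (fun u : ℝ => exp (u • (-A)) * ad (exp (u • A) y) * exp (u • A)) 0 t := by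
    intro t
    refine (((hneg t).mul (hv t)).mul (hpos t)).congr_deriv ?_
    have h2 := hA (exp (t • A) y)
    have h3 : ad (A (exp (t • A) y)) = A * ad (exp (t • A) y) - ad (exp (t • A) y) * A :=
      eq_sub_of_add_eq h2.symm
    rw [h3]
    simp only [Pi.mul_apply]
    noncomm_ring
  have hc := is_const_of_deriv_eq_zero (fun t => (hF t).differentiableAt)
    (fun t => (hF t).deriv) 1 0
  simp only [one_smul, zero_smul, exp_zero, one_mul, mul_one] at hc
  let _ : NormedAlgebra ℚ (g →L[ℝ] g) := NormedAlgebra.restrictScalars ℚ ℝ (g →L[ℝ] g)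
  have hinv : exp A * exp (-A) = 1 := by
    rw [← exp_add_of_commute ((Commute.refl A).neg_right), add_neg_cancel, exp_zero]
  have h4 := congrArg (fun T => exp A * T) hc
  simp only [← mul_assoc, hinv, one_mul] at h4
  exact h4

/-- Let `g` be a finite-dimensional real vector space with a bilinear
bracket satisfying the left Leibniz identity, and let `ad x : y ↦ [x,y]`. Then
`x ∘ y := exp(ad x) y` makes `(g, ∘, 0)` a pointed rack: `∘` is left self-distributive,
each left translation is a bijection, and `0 ∘ x = x`, `x ∘ 0 = 0`. -/
theorem leibniz_exp_rack {g : Type*} [NormedAddCommGroup g] [NormedSpace ℝ g]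
    [FiniteDimensional ℝ g] (bracket : g →ₗ[ℝ] g →ₗ[ℝ] g)
    (leibniz : ∀ x y z : g,
      bracket x (bracket y z) = bracket (bracket x y) z + bracket y (bracket x z)) :
    (∀ x y z : g,
      (fun a b : g =>
          NormedSpace.exp (LinearMap.toContinuousLinearMap (bracket a)) b) x
        ((fun a b : g =>
          NormedSpace.exp (LinearMap.toContinuousLinearMap (bracket a)) b) y z)
      = (fun a b : g =>
          NormedSpace.exp (LinearMap.toContinuousLinearMap (bracket a)) b)
          ((fun a b : g =>
            NormedSpace.exp (LinearMap.toContinuousLinearMap (bracket a)) b) x y)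
          ((fun a b : g =>
            NormedSpace.exp (LinearMap.toContinuousLinearMap (bracket a)) b) x z)) ∧
    (∀ x : g,
      NormedSpace.exp (LinearMap.toContinuousLinearMap (bracket (0 : g))) x = x) ∧
    (∀ x : g,
      NormedSpace.exp (LinearMap.toContinuousLinearMap (bracket x)) (0 : g) = 0) ∧
    (∀ x : g, Function.Bijective
      (fun y : g => NormedSpace.exp (LinearMap.toContinuousLinearMap (bracket x)) y)) := by
  have : CompleteSpace g := FiniteDimensional.complete ℝ g
  let _ : NormedAlgebra ℚ (g →L[ℝ] g) := NormedAlgebra.restrictScalars ℚ ℝ (g →L[ℝ] g)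
  refine ⟨?_, ?_, ?_, ?_⟩
  · intro x y z
    let ad : g →L[ℝ] (g →L[ℝ] g) := LinearMap.toContinuousLinearMap
      ((LinearMap.toContinuousLinearMap : (g →ₗ[ℝ] g) ≃ₗ[ℝ] (g →L[ℝ] g)).toLinearMap ∘ₗ bracket)
    have had : ∀ v, LinearMap.toContinuousLinearMap (bracket v) = ad v := fun v => rfl
    simp only [had]
    have key := exp_intertwine_aux ad (ad x)
      (fun v => ContinuousLinearMap.ext fun w => leibniz x v w) y
    have hu : ad (NormedSpace.exp (ad x) y) * NormedSpace.exp (ad x)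
        = NormedSpace.exp (ad x) * ad y := key
    have hs : SemiconjBy (NormedSpace.exp (ad x)) (ad y) (ad (NormedSpace.exp (ad x) y)) :=
      hu.symm
    have hinv : NormedSpace.exp (ad x) * NormedSpace.exp (-(ad x)) = 1 := by
      rw [← NormedSpace.exp_add_of_commute ((Commute.refl (ad x)).neg_right), add_neg_cancel,
        NormedSpace.exp_zero]
    have hinv' : NormedSpace.exp (-(ad x)) * NormedSpace.exp (ad x) = 1 := by
      rw [← NormedSpace.exp_add_of_commute ((Commute.refl (ad x)).neg_left), neg_add_cancel,
        NormedSpace.exp_zero]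
    let U : (g →L[ℝ] g)ˣ := ⟨NormedSpace.exp (ad x), NormedSpace.exp (-(ad x)), hinv, hinv'⟩
    have e1 : ad (NormedSpace.exp (ad x) y) = (U : g →L[ℝ] g) * ad y * ((U⁻¹ : (g →L[ℝ] g)ˣ)) := by
      rw [Units.eq_mul_inv_iff_mul_eq]
      exact key
    have e2 : NormedSpace.exp (ad (NormedSpace.exp (ad x) y)) * (U : g →L[ℝ] g)
        = U * NormedSpace.exp (ad y) := by
      rw [e1, NormedSpace.exp_units_conj, Units.inv_mul_cancel_right]
    exact (DFunLike.congr_fun e2 z).symm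
  · intro x
    simp
  · intro x
    simp
  · intro x
    set A := LinearMap.toContinuousLinearMap (bracket x)
    have hinv : NormedSpace.exp A * NormedSpace.exp (-A) = 1 := by
      rw [← NormedSpace.exp_add_of_commute ((Commute.refl A).neg_right), add_neg_cancel,
        NormedSpace.exp_zero]
    have hinv' : NormedSpace.exp (-A) * NormedSpace.exp A = 1 := by
      rw [← NormedSpace.exp_add_of_commute ((Commute.refl A).neg_left), neg_add_cancel,
        NormedSpace.exp_zero]
    exact Function.bijective_iff_has_inverse.mpr ⟨fun y => NormedSpace.exp (-A) y,
      fun y => DFunLike.congr_fun hinv' y, fun y => DFunLike.congr_fun hinv y⟩
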